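/- arXiv:2402.07740 — 2 statements merged into one kernel-verified Lean document; each statement's English description precedes it below -/
import Mathlib

section
/- For every real x > 0, G(x) = lim_{n→∞} (n+1)^{(x−1)(x−2)/2} · (n!)^{x−1} · ∏_{k=0}^{n−1} Γ(k+1)/Γ(k+x) (an Euler-type limit representation of the double gamma function). -/
open Real

/-- The double gamma function, defined by its Weierstrass product. -/
noncomputable def doubleGamma (x : ℝ) : ℝ :=
  (2 * π) ^ ((x - 1) / 2) *
    Real.exp (-(x - 1) * x / 2 - Real.eulerMascheroniConstant * (x - 1) ^ 2 / 2) *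
    ∏' n : ℕ,
      ((1 + (x - 1) / (n + 1)) ^ (n + 1) *
        Real.exp (-(x - 1) + (x - 1) ^ 2 / (2 * (n + 1))))

/-!
Abel summation with `Γ (k + 1 + x) = (k + x) Γ (k + x)` gives
`∏ k < n, Γ (k + 1) / Γ (k + x) =
  (n! / Γ (n + x)) ^ n * ∏ k < n, (1 + (x - 1) / (k + 1)) ^ (k + 1)`,
so the Euler sequence is a partial Weierstrass product times an explicit correction. Stirling's
formula and `H_n - log n → γ` control every part of the correction except
`(Γ (n + x) / (n! n ^ (x - 1))) ^ n`, which needs the second-order statement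
`n log (Γ (n + x) / (n! n ^ (x - 1))) → x (x - 1) / 2`. The increments of that logarithm are
`log (1 + x / n) - x log (1 + 1 / n) = -x (x - 1) / (2 n²) + o(n⁻²)`, so it follows from the
Stolz–Cesàro theorem for null sequences.
-/

open Asymptotics Filter Topology

lemma prod_range_eq_pow_mul_prod_pow_succ {M : Type*} [CommMonoid M] {f w : ℕ → M}
    (h : ∀ k, f k = w k * f (k + 1)) (n : ℕ) :
    ∏ k ∈ Finset.range n, f k = f n ^ n * ∏ k ∈ Finset.range n, w k ^ (k + 1) := by
  induction n with
  | zero => simp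
  | succ n ih =>
    calc ∏ k ∈ Finset.range (n + 1), f k
        = f n ^ (n + 1) * ∏ k ∈ Finset.range n, w k ^ (k + 1) := by
          rw [Finset.prod_range_succ, ih, pow_succ, mul_right_comm]
      _ = f (n + 1) ^ (n + 1) * ∏ k ∈ Finset.range (n + 1), w k ^ (k + 1) := by
          rw [h n, mul_pow, Finset.prod_range_succ, mul_comm (w n ^ _), mul_assoc,
            mul_comm (w n ^ _)]

section StolzCesaro

lemma isLittleO_of_isLittleO_sub_succ {E : Type*} [SeminormedAddCommGroup E] {a : ℕ → E}
    {b : ℕ → ℝ} (ha : Tendsto a atTop (𝓝 0)) (hb : Tendsto b atTop (𝓝 0)) (hanti : Antitone b)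
    (h : (fun n => a n - a (n + 1)) =o[atTop] fun n => b n - b (n + 1)) : a =o[atTop] b := by
  refine IsLittleO.of_bound fun ε hε => ?_
  obtain ⟨N, hN⟩ := eventually_atTop.1 (h.bound hε)
  filter_upwards [eventually_ge_atTop N] with n hn
  have telescope : ∀ m ≥ n, dist (a n) (a m) ≤ ε * (b n - b m) := fun m hm => by
    rw [← neg_sub_neg, ← Finset.sum_Ico_sub (fun k => -b k) hm, Finset.mul_sum]
    refine dist_le_Ico_sum_of_dist_le hm fun {k} hk _ => ?_
    have step := hN k (hn.trans hk)
    rwa [Real.norm_of_nonneg (sub_nonneg.2 (hanti k.le_succ)), ← dist_eq_norm,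
      ← neg_sub_neg] at step
  have limit : dist (a n) 0 ≤ ε * (b n - 0) :=
    le_of_tendsto_of_tendsto (tendsto_const_nhds.dist ha) ((hb.const_sub (b n)).const_mul ε)
      (eventually_atTop.2 ⟨n, telescope⟩)
  rw [dist_zero_right, sub_zero] at limit
  exact limit.trans (mul_le_mul_of_nonneg_left (le_abs_self _) hε.le)

lemma tendsto_div_of_tendsto_sub_succ_div_sub_succ {a b : ℕ → ℝ} {c : ℝ}
    (ha : Tendsto a atTop (𝓝 0)) (hb : Tendsto b atTop (𝓝 0)) (hanti : StrictAnti b)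
    (h : Tendsto (fun n => (a n - a (n + 1)) / (b n - b (n + 1))) atTop (𝓝 c)) :
    Tendsto (fun n => a n / b n) atTop (𝓝 c) := by
  have hb_pos (n : ℕ) : 0 < b n :=
    (hanti.antitone.le_of_tendsto hb (n + 1)).trans_lt (hanti n.lt_succ_self)
  have hsub_pos (n : ℕ) : 0 < b n - b (n + 1) := sub_pos.2 (hanti n.lt_succ_self)
  have hlittle : (fun n => a n - c * b n) =o[atTop] b := by
    refine isLittleO_of_isLittleO_sub_succ (by simpa using ha.sub (hb.const_mul c)) hb
      hanti.antitone (isLittleO_of_tendsto (fun n hn => absurd hn (hsub_pos n).ne') ?_)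
    have hc := h.sub_const c
    rw [sub_self] at hc
    refine hc.congr fun n => ?_
    have := (hsub_pos n).ne'
    field_simp
    ring
  have hlim := hlittle.tendsto_div_nhds_zero.add_const c
  rw [zero_add] at hlim
  refine hlim.congr fun n => ?_
  have := (hb_pos n).ne'
  field_simp
  ring

end StolzCesaro

section LogExpansion

lemma log_one_add_sub_isBigO :
    (fun u : ℝ => Real.log (1 + u) - (u - u ^ 2 / 2)) =O[𝓝 0] fun u => u ^ 3 := by
  refine IsBigO.of_bound 2 ?_
  filter_upwards [Metric.ball_mem_nhds (0 : ℝ) one_half_pos] with u hu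
  have hu : |u| < 1 / 2 := by simpa using hu
  have taylor := Real.abs_log_sub_add_sum_range_le (x := -u) (by rw [abs_neg]; linarith) 2
  calc ‖Real.log (1 + u) - (u - u ^ 2 / 2)‖
      ≤ |u| ^ 3 / (1 - |u|) := by
        convert! taylor using 2
        · rw [Finset.sum_range_succ, Finset.sum_range_one, sub_neg_eq_add]
          push_cast
          ring
        · rw [abs_neg]
        · rw [abs_neg]
    _ ≤ |u| ^ 3 / 2⁻¹ := by gcongr; linarith
    _ = 2 * ‖u ^ 3‖ := by rw [Real.norm_eq_abs, abs_pow]; ring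

lemma log_one_add_div_natCast_sub_isBigO (s : ℝ) :
    (fun n : ℕ => Real.log (1 + s / n) - (s / n - (s / n) ^ 2 / 2)) =O[atTop]
      fun n : ℕ => ((n : ℝ) ^ 3)⁻¹ := by
  refine (log_one_add_sub_isBigO.comp_tendsto (tendsto_const_div_atTop_nhds_zero_nat s)).trans ?_
  refine IsBigO.of_bound |s ^ 3| (Eventually.of_forall fun n => ?_)
  rw [Function.comp_apply, div_pow, div_eq_mul_inv, norm_mul, Real.norm_eq_abs (s ^ 3)]

lemma tendsto_sq_mul_log_one_add_div_natCast_sub (s : ℝ) :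
    Tendsto (fun n : ℕ => (n : ℝ) ^ 2 * (Real.log (1 + s / n) - s / n)) atTop
      (𝓝 (-s ^ 2 / 2)) := by
  have hremainder : Tendsto (fun n : ℕ =>
      (n : ℝ) ^ 2 * (Real.log (1 + s / n) - (s / n - (s / n) ^ 2 / 2))) atTop (𝓝 0) := by
    refine ((isBigO_refl (fun n : ℕ => (n : ℝ) ^ 2) atTop).mul
      (log_one_add_div_natCast_sub_isBigO s)).trans_tendsto ?_
    refine (tendsto_inv_atTop_nhds_zero_nat (𝕜 := ℝ)).congr fun n => ?_
    rcases eq_or_ne (n : ℝ) 0 with hn | hn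
    · simp [hn]
    · field_simp
  have hlim := hremainder.add_const (-s ^ 2 / 2)
  rw [zero_add] at hlim
  refine hlim.congr' ?_
  filter_upwards [eventually_ne_atTop 0] with n hn
  field_simp
  ring

end LogExpansion

section GammaRatio

/-- The quotient of `Γ (n + x)` by its leading-order asymptotics `n! n ^ (x - 1)`. The value at
`n = 0` is irrelevant. -/
noncomputable def gammaRatio (x : ℝ) (n : ℕ) : ℝ :=
  Real.Gamma (n + x) / (n.factorial * (n : ℝ) ^ (x - 1))

lemma Gamma_natCast_add_eq_prod_mul {x : ℝ} (hx : ∀ m : ℕ, x ≠ -m) (n : ℕ) :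
    Real.Gamma (n + x) = (∏ j ∈ Finset.range n, (x + j)) * Real.Gamma x := by
  induction n with
  | zero => simp
  | succ n ih =>
    have hne : (n : ℝ) + x ≠ 0 := fun h => hx n (by linarith)
    rw [Finset.prod_range_succ, Nat.cast_succ, add_right_comm, Real.Gamma_add_one hne, ih]
    ring

lemma tendsto_gammaRatio {x : ℝ} (hx : ∀ m : ℕ, x ≠ -m) :
    Tendsto (gammaRatio x) atTop (𝓝 1) := by
  have hΓ := Real.Gamma_ne_zero hx
  have hseq := ((Real.GammaSeq_tendsto_Gamma x).inv₀ hΓ).const_mul (Real.Gamma x)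
  have hlim := hseq.mul (tendsto_natCast_div_add_atTop x)
  rw [mul_inv_cancel₀ hΓ, one_mul] at hlim
  refine hlim.congr' ?_
  filter_upwards [eventually_ne_atTop 0] with n hn
  have hne : x + n ≠ 0 := fun h => hx n (by linarith)
  have hn' : (n : ℝ) ≠ 0 := Nat.cast_ne_zero.2 hn
  rw [gammaRatio, Gamma_natCast_add_eq_prod_mul hx, Real.GammaSeq, Finset.prod_range_succ,
    Real.rpow_sub_one hn', add_comm (n : ℝ) x]
  field_simp

lemma gammaRatio_succ {x : ℝ} {n : ℕ} (hn : n ≠ 0) (hne : (n : ℝ) + x ≠ 0) :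
    gammaRatio x (n + 1) = gammaRatio x n * ((1 + x / n) / (1 + 1 / n) ^ x) := by
  have hn' : (0 : ℝ) < n := by positivity
  have hsucc : 1 + 1 / (n : ℝ) = (n + 1) / n := by field_simp
  rw [gammaRatio, gammaRatio, hsucc, Real.div_rpow (by positivity) hn'.le, Nat.cast_succ,
    add_right_comm, Real.Gamma_add_one hne, Nat.factorial_succ, Nat.cast_mul, Nat.cast_succ,
    Real.rpow_sub_one (by positivity), Real.rpow_sub_one hn'.ne']
  field_simp

lemma log_gammaRatio_sub_succ {x : ℝ} {n : ℕ} (hn : n ≠ 0) (hpos : 0 < (n : ℝ) + x) :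
    Real.log (gammaRatio x n) - Real.log (gammaRatio x (n + 1)) =
      x * Real.log (1 + 1 / n) - Real.log (1 + x / n) := by
  have hn' : (0 : ℝ) < n := by positivity
  have hratio : 0 < gammaRatio x n := div_pos (Real.Gamma_pos_of_pos hpos) (by positivity)
  have hx : 0 < 1 + x / n := by rw [one_add_div hn'.ne']; positivity
  rw [gammaRatio_succ hn hpos.ne', Real.log_mul hratio.ne' (by positivity),
    Real.log_div hx.ne' (by positivity), Real.log_rpow (by positivity)]
  ring

lemma tendsto_sq_mul_log_gammaRatio_sub_succ (x : ℝ) :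
    Tendsto (fun n : ℕ => (n : ℝ) ^ 2 *
      (Real.log (gammaRatio x n) - Real.log (gammaRatio x (n + 1)))) atTop
      (𝓝 (x * (x - 1) / 2)) := by
  have hlim := ((tendsto_sq_mul_log_one_add_div_natCast_sub 1).const_mul x).sub
    (tendsto_sq_mul_log_one_add_div_natCast_sub x)
  rw [show x * (-1 ^ 2 / 2) - -x ^ 2 / 2 = x * (x - 1) / 2 by ring] at hlim
  refine hlim.congr' ?_
  filter_upwards [eventually_ne_atTop 0,
    tendsto_natCast_atTop_atTop.eventually_gt_atTop (-x)] with n hn hnx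
  rw [log_gammaRatio_sub_succ hn (by linarith)]
  ring

lemma tendsto_mul_log_gammaRatio {x : ℝ} (hx : ∀ m : ℕ, x ≠ -m) :
    Tendsto (fun n : ℕ => (n : ℝ) * Real.log (gammaRatio x n)) atTop (𝓝 (x * (x - 1) / 2)) := by
  have hlog : Tendsto (fun n => Real.log (gammaRatio x n)) atTop (𝓝 0) := by
    simpa using (tendsto_gammaRatio hx).log one_ne_zero
  have hinv : Tendsto (fun n : ℕ => (n : ℝ)⁻¹) atTop (𝓝 0) := tendsto_inv_atTop_nhds_zero_nat
  have hanti : StrictAnti fun n : ℕ => ((n + 1 : ℕ) : ℝ)⁻¹ :=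
    strictAnti_nat_of_succ_lt fun n => by gcongr; exact Nat.lt_succ_self _
  have hincr : Tendsto (fun n : ℕ => (Real.log (gammaRatio x n) - Real.log (gammaRatio x (n + 1))) /
      ((n : ℝ)⁻¹ - ((n + 1 : ℕ) : ℝ)⁻¹)) atTop (𝓝 (x * (x - 1) / 2)) := by
    have hlim := (tendsto_sq_mul_log_gammaRatio_sub_succ x).mul (hinv.const_add 1)
    rw [add_zero, mul_one] at hlim
    refine hlim.congr' ?_
    filter_upwards [eventually_ne_atTop 0] with n hn
    have hn' : (n : ℝ) ≠ 0 := Nat.cast_ne_zero.2 hn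
    have hgap : (n : ℝ)⁻¹ - ((n + 1 : ℕ) : ℝ)⁻¹ = ((n : ℝ) ^ 2 * (1 + (n : ℝ)⁻¹))⁻¹ := by
      push_cast
      field_simp
      ring
    rw [hgap, div_inv_eq_mul]
    ring
  have hshift := tendsto_add_atTop_nat 1
  -- Shift by one, since `n⁻¹` is not antitone at `n = 0`, where its value is `0`.
  refine (tendsto_add_atTop_iff_nat 1).1 ((tendsto_div_of_tendsto_sub_succ_div_sub_succ
    (hlog.comp hshift) (hinv.comp hshift) hanti (hincr.comp hshift)).congr fun n => ?_)
  simp only [Function.comp_apply, div_inv_eq_mul, mul_comm]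

lemma tendsto_gammaRatio_pow {x : ℝ} (hx : ∀ m : ℕ, x ≠ -m) :
    Tendsto (fun n => gammaRatio x n ^ n) atTop (𝓝 (Real.exp (x * (x - 1) / 2))) := by
  refine (tendsto_mul_log_gammaRatio hx).rexp.congr' ?_
  filter_upwards [(tendsto_gammaRatio hx).eventually_const_lt one_pos] with n hpos
  rw [Real.exp_nat_mul, Real.exp_log hpos]

end GammaRatio

section WeierstrassProduct

/-- The factor of index `n + 1` of the Weierstrass product defining `doubleGamma x`. -/
noncomputable def doubleGammaFactor (x : ℝ) (n : ℕ) : ℝ :=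
  (1 + (x - 1) / (n + 1)) ^ (n + 1) * Real.exp (-(x - 1) + (x - 1) ^ 2 / (2 * (n + 1)))

lemma log_doubleGammaFactor {x : ℝ} {n : ℕ} (h : 1 + (x - 1) / ((n : ℝ) + 1) ≠ 0) :
    Real.log (doubleGammaFactor x n) = ((n : ℝ) + 1) * (Real.log (1 + (x - 1) / (n + 1)) -
      ((x - 1) / (n + 1) - ((x - 1) / (n + 1)) ^ 2 / 2)) := by
  rw [doubleGammaFactor, Real.log_mul (pow_ne_zero _ h) (Real.exp_ne_zero _), Real.log_exp,
    Real.log_pow]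
  push_cast
  field_simp
  ring

lemma multipliable_doubleGammaFactor (x : ℝ) : Multipliable (doubleGammaFactor x) := by
  have hpos : ∀ᶠ n : ℕ in atTop, 0 < 1 + (x - 1) / ((n : ℝ) + 1) := by
    filter_upwards [tendsto_natCast_atTop_atTop.eventually_gt_atTop (-x)] with n hn
    have hnx : 0 < (n : ℝ) + x := by linarith
    rw [one_add_div (by positivity), add_add_sub_cancel]
    positivity
  have hlog : (fun n => Real.log (doubleGammaFactor x n)) =O[atTop]
      fun n : ℕ => (((n + 1 : ℕ) : ℝ) ^ 2)⁻¹ := by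
    have hexpand := (isBigO_refl (fun n : ℕ => (n : ℝ)) atTop).mul
      (log_one_add_div_natCast_sub_isBigO (x - 1))
    refine (hexpand.comp_tendsto (tendsto_add_atTop_nat 1)).congr' ?_ ?_
    · filter_upwards [hpos] with n hn
      rw [log_doubleGammaFactor hn.ne', Function.comp_apply, Nat.cast_succ]
    · filter_upwards with n
      rw [Function.comp_apply]
      field_simp
  refine Real.multipliable_of_summable_log' ?_ (summable_of_isBigO_nat
    ((summable_nat_add_iff 1).2 (Real.summable_nat_pow_inv.2 one_lt_two)) hlog)
  rw [Nat.cofinite_eq_atTop]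
  filter_upwards [hpos] with n hn
  exact mul_pos (pow_pos hn _) (Real.exp_pos _)

lemma prod_range_doubleGammaFactor (x : ℝ) (n : ℕ) :
    ∏ k ∈ Finset.range n, doubleGammaFactor x k =
      (∏ k ∈ Finset.range n, (1 + (x - 1) / ((k : ℝ) + 1)) ^ (k + 1)) *
        Real.exp (-(n * (x - 1)) + (x - 1) ^ 2 / 2 * harmonic n) := by
  have hharmonic : (x - 1) ^ 2 / 2 * (harmonic n : ℝ) =
      ∑ k ∈ Finset.range n, (x - 1) ^ 2 / (2 * ((k : ℝ) + 1)) := by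
    rw [harmonic, Rat.cast_sum, Finset.mul_sum]
    refine Finset.sum_congr rfl fun k _ => ?_
    push_cast
    field_simp
  simp only [doubleGammaFactor, Finset.prod_mul_distrib, ← Real.exp_sum, Finset.sum_add_distrib,
    Finset.sum_const, Finset.card_range, nsmul_eq_mul, hharmonic, mul_neg]

end WeierstrassProduct

section EulerSequence

/-- The quotient of the `n`-th term of the Euler sequence of `doubleGamma x` by the `n`-th partial
Weierstrass product, for `n ≠ 0`, arranged so that each factor converges. -/
noncomputable def eulerCorrection (x : ℝ) (n : ℕ) : ℝ :=
  (((n : ℝ) + 1) / n) ^ ((x - 1) * (x - 2) / 2) * (√2 * Stirling.stirlingSeq n) ^ (x - 1) *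
    Real.exp (-(x - 1) ^ 2 / 2 * (harmonic n - Real.log n)) / gammaRatio x n ^ n

lemma tendsto_eulerCorrection {x : ℝ} (hx : ∀ m : ℕ, x ≠ -m) :
    Tendsto (eulerCorrection x) atTop (𝓝 ((2 * π) ^ ((x - 1) / 2) *
      Real.exp (-(x - 1) * x / 2 - Real.eulerMascheroniConstant * (x - 1) ^ 2 / 2))) := by
  have hquot : Tendsto (fun n : ℕ => ((n : ℝ) + 1) / n) atTop (𝓝 1) := by
    simpa using (tendsto_natCast_div_add_atTop (1 : ℝ)).inv₀ one_ne_zero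
  have hstirling := (Stirling.tendsto_stirlingSeq_sqrt_pi.const_mul √2).rpow_const
    (p := x - 1) (Or.inl (by positivity))
  have hharmonic := (Real.tendsto_harmonic_sub_log.const_mul (-(x - 1) ^ 2 / 2)).rexp
  have hlim := (((hquot.rpow_const (p := (x - 1) * (x - 2) / 2) (Or.inl one_ne_zero)).mul
    hstirling).mul hharmonic).div (tendsto_gammaRatio_pow hx) (Real.exp_ne_zero _)
  convert! hlim using 2
  rw [Real.one_rpow, one_mul, ← Real.sqrt_mul zero_le_two, Real.sqrt_eq_rpow,
    ← Real.rpow_mul (by positivity), mul_div_assoc (_ ^ _), ← Real.exp_sub]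
  ring_nf

lemma rpow_mul_factorial_rpow_eq (x : ℝ) {n : ℕ} (hn : n ≠ 0) :
    ((n : ℝ) + 1) ^ ((x - 1) * (x - 2) / 2) * (n.factorial : ℝ) ^ (x - 1) =
      (((n : ℝ) + 1) / n) ^ ((x - 1) * (x - 2) / 2) * (√2 * Stirling.stirlingSeq n) ^ (x - 1) *
        Real.exp (-(x - 1) ^ 2 / 2 * (harmonic n - Real.log n)) *
        (((n : ℝ) ^ (x - 1)) ^ n *
          Real.exp (-(n * (x - 1)) + (x - 1) ^ 2 / 2 * harmonic n)) := by
  have hn' : (0 : ℝ) < n := by positivity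
  have hstirling : 0 < Stirling.stirlingSeq n := by unfold Stirling.stirlingSeq; positivity
  have hlog : Real.log (√2 * Stirling.stirlingSeq n) =
      Real.log n.factorial - Real.log n / 2 - n * (Real.log n - 1) := by
    rw [Real.log_mul (by positivity) hstirling.ne', Real.log_sqrt zero_le_two,
      Stirling.log_stirlingSeq_formula, Real.log_mul two_ne_zero hn'.ne',
      Real.log_div hn'.ne' (Real.exp_ne_zero 1), Real.log_exp]
    ring
  rw [Real.rpow_def_of_pos (by positivity), Real.rpow_def_of_pos (by positivity),
    Real.rpow_def_of_pos (by positivity), Real.rpow_def_of_pos (by positivity),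
    Real.rpow_def_of_pos hn', Real.log_div (by positivity) hn'.ne', hlog, ← Real.exp_nat_mul]
  simp only [← Real.exp_add]
  congr 1
  ring

lemma prod_range_Gamma_div_Gamma {x : ℝ} (hx : ∀ m : ℕ, x ≠ -m) (n : ℕ) :
    ∏ k ∈ Finset.range n, Real.Gamma (k + 1) / Real.Gamma (k + x) =
      (n.factorial / Real.Gamma (n + x)) ^ n *
        ∏ k ∈ Finset.range n, (1 + (x - 1) / ((k : ℝ) + 1)) ^ (k + 1) := by
  rw [← Real.Gamma_nat_eq_factorial]
  refine prod_range_eq_pow_mul_prod_pow_succ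
    (f := fun k : ℕ => Real.Gamma (k + 1) / Real.Gamma (k + x)) (fun k => ?_) n
  have hne : (k : ℝ) + x ≠ 0 := fun h => hx k (by linarith)
  rw [Nat.cast_succ, add_right_comm (k : ℝ) 1 x, Real.Gamma_add_one hne,
    Real.Gamma_add_one (s := (k : ℝ) + 1) (by positivity)]
  field_simp
  ring

lemma euler_term_eq_eulerCorrection_mul_prod {x : ℝ} (hx : ∀ m : ℕ, x ≠ -m) {n : ℕ}
    (hn : n ≠ 0) :
    ((n : ℝ) + 1) ^ ((x - 1) * (x - 2) / 2) * (n.factorial : ℝ) ^ (x - 1) *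
        ∏ k ∈ Finset.range n, Real.Gamma (k + 1) / Real.Gamma (k + x) =
      eulerCorrection x n * ∏ k ∈ Finset.range n, doubleGammaFactor x k := by
  have hpow : (n : ℝ) ^ (x - 1) ≠ 0 := by positivity
  have hΓ : n.factorial / Real.Gamma (n + x) = (gammaRatio x n)⁻¹ * ((n : ℝ) ^ (x - 1))⁻¹ := by
    rw [gammaRatio, inv_div]
    field_simp
  rw [rpow_mul_factorial_rpow_eq x hn, prod_range_Gamma_div_Gamma hx, hΓ,
    prod_range_doubleGammaFactor, eulerCorrection, mul_pow, inv_pow, inv_pow]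
  field_simp

end EulerSequence

theorem doubleGamma_euler_limit_general (x : ℝ) (hx : ∀ m : ℕ, x ≠ -m) :
    Tendsto
      (fun n : ℕ =>
        ((n : ℝ) + 1) ^ ((x - 1) * (x - 2) / 2) * (Nat.factorial n : ℝ) ^ (x - 1) *
          ∏ k ∈ Finset.range n, Real.Gamma (k + 1) / Real.Gamma (k + x))
      atTop (𝓝 (doubleGamma x)) := by
  have hproduct := (multipliable_doubleGammaFactor x).hasProd.tendsto_prod_nat
  refine ((tendsto_eulerCorrection hx).mul hproduct).congr' ?_
  filter_upwards [eventually_ne_atTop 0] with n hn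
  exact (euler_term_eq_eulerCorrection_mul_prod hx hn).symm

open Filter Topology in
theorem doubleGamma_euler_limit (x : ℝ) (hx : 0 < x) :
    Tendsto
      (fun n : ℕ =>
        ((n : ℝ) + 1) ^ ((x - 1) * (x - 2) / 2) * (Nat.factorial n : ℝ) ^ (x - 1) *
          ∏ k ∈ Finset.range n, Real.Gamma (k + 1) / Real.Gamma (k + x))
      atTop (𝓝 (doubleGamma x)) := by
  refine doubleGamma_euler_limit_general x fun m => ne_of_gt ?_
  exact (neg_nonpos.2 m.cast_nonneg).trans_lt hx
end

section
/- Alekseevsky's integral representation: for every real x > 0, ln G(x) = ∫_0^∞ (e^{−u}/u) · ( (x−1)(x−2)/2 − (x−1)/(1 − e^{−u}) + (1 − e^{−(x−1)u})/(1 − e^{−u})² ) du. -/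
open Real

/-! The functional equation `G (x + 1) = Γ x * G x` shows that `log G` vanishes at the nodes
`1, 2, 3`, so `log G` equals the error made when interpolating it there by a quadratic polynomial.
That error is linear in the function and annihilates quadratic polynomials. In the logarithm of
the Weierstrass product it therefore annihilates the convergence factors and leaves only the terms
`(n + 1) * log ((n + x) / (n + 1))`, which are Frullani integrals. As a function of `u` the
interpolation error of `x ↦ exp (-x * u)` has constant sign, so that sum and integral can be
interchanged, and `∑ (n + 1) * exp (-n * u) = (1 - exp (-u))⁻²` produces the integrand. -/

open MeasureTheory Filter Topology Finset

/-! ### Quadratic interpolation at `1, 2, 3` -/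

section NewtonRemainder

/-- The error at `x` of the quadratic interpolation of `f` at the nodes `1, 2, 3`, with the
interpolating polynomial in Newton's form. -/
noncomputable def newtonRemainder (f : ℝ → ℝ) (x : ℝ) : ℝ :=
  f x - (f 1 + (x - 1) * (f 2 - f 1) + (x - 1) * (x - 2) / 2 * (f 3 - 2 * f 2 + f 1))

variable {f g : ℝ → ℝ} {x : ℝ}

lemma newtonRemainder_eq_self (h₁ : f 1 = 0) (h₂ : f 2 = 0) (h₃ : f 3 = 0) :
    newtonRemainder f x = f x := by
  simp [newtonRemainder, h₁, h₂, h₃]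

lemma newtonRemainder_congr (h : ∀ y ∈ ({1, 2, 3, x} : Set ℝ), f y = g y) :
    newtonRemainder f x = newtonRemainder g x := by
  simp only [newtonRemainder, h 1 (by simp), h 2 (by simp), h 3 (by simp), h x (by simp)]

lemma pos_of_mem_nodes (hx : 0 < x) : ∀ y ∈ ({1, 2, 3, x} : Set ℝ), 0 < y := by
  simp [hx]

lemma newtonRemainder_mul_add_quadratic (f : ℝ → ℝ) (x c a₀ a₁ a₂ : ℝ) :
    newtonRemainder (fun y ↦ c * f y + (a₀ + a₁ * y + a₂ * y ^ 2)) x =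
      c * newtonRemainder f x := by
  unfold newtonRemainder
  ring

lemma hasSum_newtonRemainder {ι : Type*} {F : ι → ℝ → ℝ}
    (h : ∀ y ∈ ({1, 2, 3, x} : Set ℝ), HasSum (fun i ↦ F i y) (g y)) :
    HasSum (fun i ↦ newtonRemainder (F i) x) (newtonRemainder g x) := by
  have h₁ := h 1 (by simp)
  have h₂ := h 2 (by simp)
  have h₃ := h 3 (by simp)
  exact (h x (by simp)).sub ((h₁.add ((h₂.sub h₁).mul_left _)).add
    (((h₃.sub (h₂.mul_left 2)).add h₁).mul_left _))

variable {α : Type*} [MeasurableSpace α] {μ : Measure α} {F : ℝ → α → ℝ}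

lemma integrable_newtonRemainder (h : ∀ y ∈ ({1, 2, 3, x} : Set ℝ), Integrable (F y) μ) :
    Integrable (fun a ↦ newtonRemainder (F · a) x) μ := by
  have h₁ := h 1 (by simp)
  have h₂ := h 2 (by simp)
  have h₃ := h 3 (by simp)
  exact (h x (by simp)).sub ((h₁.add ((h₂.sub h₁).const_mul _)).add
    (((h₃.sub (h₂.const_mul 2)).add h₁).const_mul _))

lemma integral_newtonRemainder (h : ∀ y ∈ ({1, 2, 3, x} : Set ℝ), Integrable (F y) μ) :
    ∫ a, newtonRemainder (F · a) x ∂μ = newtonRemainder (fun y ↦ ∫ a, F y a ∂μ) x := by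
  have h₁ := h 1 (by simp)
  have h₂ := h 2 (by simp)
  have h₃ := h 3 (by simp)
  have hx := h x (by simp)
  simp only [newtonRemainder]
  rw [integral_sub (by fun_prop) (by fun_prop), integral_add (by fun_prop) (by fun_prop),
    integral_add (by fun_prop) (by fun_prop), integral_const_mul, integral_const_mul,
    integral_sub (by fun_prop) (by fun_prop), integral_add (by fun_prop) (by fun_prop),
    integral_sub (by fun_prop) (by fun_prop), integral_const_mul]

end NewtonRemainder

/-! ### The logarithm of the Weierstrass product -/

/-- The logarithm of the `n`-th factor of the Weierstrass product of `doubleGamma`; the factors are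
numbered from `0` as in that definition. -/
noncomputable def logWeierstrassFactor (n : ℕ) (x : ℝ) : ℝ :=
  (n + 1) * log (1 + (x - 1) / (n + 1)) - (x - 1) + (x - 1) ^ 2 / (2 * (n + 1))

lemma one_add_sub_one_div_eq (n : ℕ) (x : ℝ) :
    1 + (x - 1) / ((n : ℝ) + 1) = (n + x) / (n + 1) := by
  field_simp
  ring

lemma abs_log_one_add_sub_add_sq_le {t : ℝ} (ht : |t| ≤ 1 / 2) :
    |log (1 + t) - t + t ^ 2 / 2| ≤ 2 * |t| ^ 3 := by
  have h := abs_log_sub_add_sum_range_le (x := -t) (by rw [abs_neg]; linarith) 2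
  simp only [sum_range_succ, sum_range_zero, abs_neg] at h
  calc |log (1 + t) - t + t ^ 2 / 2| ≤ |t| ^ 3 / (1 - |t|) := by
        convert h using 2
        push_cast
        ring_nf
    _ ≤ |t| ^ 3 / (1 / 2) := by gcongr; linarith
    _ = 2 * |t| ^ 3 := by ring

lemma summable_logWeierstrassFactor (x : ℝ) : Summable (logWeierstrassFactor · x) := by
  have hsq : Summable fun n : ℕ ↦ 2 * |x - 1| ^ 3 * (1 / ((n : ℝ) + 1) ^ 2) := by
    simpa using ((summable_nat_add_iff 1).2
      (summable_one_div_nat_pow.2 one_lt_two)).mul_left (2 * |x - 1| ^ 3)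
  refine .of_norm_bounded_eventually_nat hsq ?_
  filter_upwards [eventually_ge_atTop ⌈2 * |x - 1|⌉₊] with n hn
  have hn' : 2 * |x - 1| ≤ n := Nat.ceil_le.1 hn
  have hpos : (0 : ℝ) < n + 1 := by positivity
  have hdiv : |(x - 1) / (n + 1)| = |x - 1| / (n + 1) := by rw [abs_div, abs_of_pos hpos]
  have hsmall : |(x - 1) / (n + 1)| ≤ 1 / 2 := by
    rw [hdiv, div_le_iff₀ hpos]
    linarith
  have hfactor : logWeierstrassFactor n x = (n + 1) *
      (log (1 + (x - 1) / (n + 1)) - (x - 1) / (n + 1) + ((x - 1) / (n + 1)) ^ 2 / 2) := by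
    rw [logWeierstrassFactor]
    field_simp
  calc ‖logWeierstrassFactor n x‖
      = (n + 1) * |log (1 + (x - 1) / (n + 1)) - (x - 1) / (n + 1)
          + ((x - 1) / (n + 1)) ^ 2 / 2| := by
        rw [hfactor, norm_mul, norm_of_nonneg hpos.le, norm_eq_abs]
    _ ≤ (n + 1) * (2 * |(x - 1) / (n + 1)| ^ 3) := by
        gcongr
        exact abs_log_one_add_sub_add_sq_le hsmall
    _ = 2 * |x - 1| ^ 3 * (1 / (n + 1) ^ 2) := by
        rw [hdiv]
        field_simp

section DoubleGamma

variable {x : ℝ}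

lemma log_doubleGamma (hx : 0 < x) :
    log (doubleGamma x) = (x - 1) / 2 * log (2 * π)
      + (-(x - 1) * x / 2 - eulerMascheroniConstant * (x - 1) ^ 2 / 2)
      + ∑' n, logWeierstrassFactor n x := by
  have hbase (n : ℕ) : 0 < 1 + (x - 1) / ((n : ℝ) + 1) := by
    rw [one_add_sub_one_div_eq]
    positivity
  set P : ℕ → ℝ := fun n ↦ (1 + (x - 1) / ((n : ℝ) + 1)) ^ (n + 1) *
    exp (-(x - 1) + (x - 1) ^ 2 / (2 * (n + 1))) with hP
  have hP_pos (n : ℕ) : 0 < P n := mul_pos (pow_pos (hbase n) _) (exp_pos _)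
  have hP_log (n : ℕ) : log (P n) = logWeierstrassFactor n x := by
    rw [hP, log_mul (pow_pos (hbase n) _).ne' (exp_pos _).ne', log_exp, log_pow,
      logWeierstrassFactor]
    push_cast
    ring
  have hprod : ∏' n, P n = exp (∑' n, logWeierstrassFactor n x) := by
    simpa only [hP_log] using (rexp_tsum_eq_tprod hP_pos
      (by simpa only [hP_log] using summable_logWeierstrassFactor x)).symm
  rw [doubleGamma, hprod, log_mul (by positivity) (by positivity),
    log_mul (by positivity) (by positivity), log_exp, log_exp, log_rpow (by positivity)]

lemma logWeierstrassFactor_add_one_sub (hx : 0 < x) (n : ℕ) :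
    logWeierstrassFactor n (x + 1) - logWeierstrassFactor n x =
      (n + 1) * (log (x + (n + 1)) - log (x + n)) - 1 + (x - 1 / 2) / (n + 1) := by
  rw [logWeierstrassFactor, logWeierstrassFactor, one_add_sub_one_div_eq, one_add_sub_one_div_eq,
    log_div (by positivity) (by positivity), log_div (by positivity) (by positivity),
    add_comm x n, show x + ((n : ℝ) + 1) = n + (x + 1) by ring]
  field_simp
  ring

lemma sum_range_logWeierstrassFactor_add_one_sub (hx : 0 < x) (N : ℕ) :
    ∑ n ∈ range N, (logWeierstrassFactor n (x + 1) - logWeierstrassFactor n x) =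
      (N + 1) * log (x + N) - ∑ n ∈ range (N + 1), log (x + n) - N
        + (x - 1 / 2) * harmonic N := by
  induction N with
  | zero => simp
  | succ N ih =>
    rw [sum_range_succ, ih, logWeierstrassFactor_add_one_sub hx, sum_range_succ _ (N + 1),
      harmonic_succ]
    push_cast
    ring

lemma tsum_logWeierstrassFactor_add_one_sub (hx : 0 < x) :
    ∑' n, (logWeierstrassFactor n (x + 1) - logWeierstrassFactor n x) =
      log (Gamma x) + x - log (2 * π) / 2 + (x - 1 / 2) * eulerMascheroniConstant := by
  have hstirling : Tendsto (fun N ↦ log (Stirling.stirlingSeq N)) atTop (𝓝 (log √π)) :=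
    Stirling.tendsto_stirlingSeq_sqrt_pi.log (by positivity)
  have hlog : Tendsto (fun N : ℕ ↦ log (1 + x / N)) atTop (𝓝 0) := by
    simpa using ((tendsto_const_div_atTop_nhds_zero_nat x).const_add 1).log (by norm_num)
  have hmul_log : Tendsto (fun N : ℕ ↦ (N : ℝ) * log (1 + x / N)) atTop (𝓝 x) :=
    (tendsto_mul_log_one_add_div_atTop x).comp tendsto_natCast_atTop_atTop
  have hlim := ((((BohrMollerup.tendsto_log_gamma hx).add (hmul_log.add hlog)).sub
    (hstirling.add_const (log 2 / 2))).add (tendsto_harmonic_sub_log.const_mul (x - 1 / 2)))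
  have hlim_eq : log (Gamma x) + (x + 0) - (log √π + log 2 / 2)
      + (x - 1 / 2) * eulerMascheroniConstant =
      log (Gamma x) + x - log (2 * π) / 2 + (x - 1 / 2) * eulerMascheroniConstant := by
    rw [log_sqrt (by positivity), log_mul (by positivity) (by positivity)]
    ring
  rw [hlim_eq] at hlim
  refine tendsto_nhds_unique ((summable_logWeierstrassFactor (x + 1)).sub
    (summable_logWeierstrassFactor x)).hasSum.tendsto_sum_nat (hlim.congr' ?_)
  filter_upwards [eventually_gt_atTop 0] with N hN
  have hN' : (0 : ℝ) < N := mod_cast hN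
  have hdiv : log (1 + x / N) = log (x + N) - log N := by
    rw [← log_div (by positivity) hN'.ne']
    congr 1
    field_simp
    ring
  rw [sum_range_logWeierstrassFactor_add_one_sub hx, Stirling.log_stirlingSeq_formula,
    BohrMollerup.logGammaSeq, hdiv, log_mul two_ne_zero hN'.ne',
    log_div hN'.ne' (exp_pos 1).ne', log_exp]
  ring

lemma log_doubleGamma_add_one (hx : 0 < x) :
    log (doubleGamma (x + 1)) = log (Gamma x) + log (doubleGamma x) := by
  have h := (summable_logWeierstrassFactor (x + 1)).tsum_sub (summable_logWeierstrassFactor x)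
  rw [tsum_logWeierstrassFactor_add_one_sub hx] at h
  rw [log_doubleGamma hx, log_doubleGamma (by positivity)]
  linear_combination -h

lemma log_doubleGamma_one : log (doubleGamma 1) = 0 := by
  simp [doubleGamma]

lemma log_doubleGamma_two : log (doubleGamma 2) = 0 := by
  have h := log_doubleGamma_add_one one_pos
  rwa [one_add_one_eq_two, Gamma_one, log_one, log_doubleGamma_one, add_zero] at h

lemma log_doubleGamma_three : log (doubleGamma 3) = 0 := by
  have h := log_doubleGamma_add_one two_pos
  rwa [two_add_one_eq_three, Gamma_two, log_one, log_doubleGamma_two, add_zero] at h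

lemma hasSum_newtonRemainder_logWeierstrassFactor (hx : 0 < x) :
    HasSum (fun n ↦ newtonRemainder (logWeierstrassFactor n) x) (log (doubleGamma x)) := by
  set S : ℝ → ℝ := fun y ↦ ∑' n, logWeierstrassFactor n y
  have hS : newtonRemainder S x = log (doubleGamma x) := by
    rw [← newtonRemainder_eq_self (f := fun y ↦ log (doubleGamma y)) log_doubleGamma_one
      log_doubleGamma_two log_doubleGamma_three, ← one_mul (newtonRemainder S x),
      ← newtonRemainder_mul_add_quadratic S x 1 (-log (2 * π) / 2 - eulerMascheroniConstant / 2)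
        (log (2 * π) / 2 + 1 / 2 + eulerMascheroniConstant)
        (-1 / 2 - eulerMascheroniConstant / 2)]
    refine newtonRemainder_congr fun y hy ↦ ?_
    rw [log_doubleGamma (pos_of_mem_nodes hx y hy)]
    ring
  exact hS ▸ hasSum_newtonRemainder fun y _ ↦ (summable_logWeierstrassFactor y).hasSum

end DoubleGamma

/-! ### Frullani integrals -/

section Frullani

variable {a b : ℝ}

lemma integrableOn_exp_sub_exp_div (ha : 0 < a) (hb : 0 < b) :
    IntegrableOn (fun u ↦ (exp (-(a * u)) - exp (-(b * u))) / u) (Set.Ioi 0) := by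
  wlog hab : a ≤ b generalizing a b
  · refine (this hb ha (le_of_not_ge hab)).neg.congr_fun (fun u _ ↦ ?_) measurableSet_Ioi
    simp only [Pi.neg_apply]
    ring
  have hdom : IntegrableOn (fun u ↦ (b - a) * exp (-a * u)) (Set.Ioi 0) :=
    (exp_neg_integrableOn_Ioi 0 ha).const_mul _
  refine hdom.mono' (Measurable.aestronglyMeasurable (by fun_prop)) ?_
  refine ae_restrict_of_forall_mem measurableSet_Ioi fun u (hu : 0 < u) ↦ ?_
  have hle : exp (-(b * u)) ≤ exp (-(a * u)) := by gcongr
  have hfactor : exp (-(b * u)) = exp (-(a * u)) * exp (-((b - a) * u)) := by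
    rw [← exp_add]
    ring_nf
  have hbound : 1 - exp (-((b - a) * u)) ≤ (b - a) * u := by
    linarith [add_one_le_exp (-((b - a) * u))]
  rw [norm_of_nonneg (div_nonneg (sub_nonneg.2 hle) hu.le), div_le_iff₀ hu]
  calc exp (-(a * u)) - exp (-(b * u))
      = exp (-(a * u)) * (1 - exp (-((b - a) * u))) := by rw [hfactor]; ring
    _ ≤ exp (-(a * u)) * ((b - a) * u) := by gcongr
    _ = (b - a) * exp (-a * u) * u := by rw [neg_mul]; ring

lemma integral_exp_sub_exp_div (ha : 0 < a) (hb : 0 < b) :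
    ∫ u in Set.Ioi (0 : ℝ), (exp (-(a * u)) - exp (-(b * u))) / u = log (b / a) := by
  have hcont : Continuous fun u : ℝ ↦ exp (-u) := by fun_prop
  have hzero : Tendsto (fun u : ℝ ↦ exp (-u)) (𝓝[>] 0) (𝓝 1) := by
    simpa using (hcont.tendsto 0).mono_left nhdsWithin_le_nhds
  have h := Frullani.integral_Ioi_eq (hcont.locallyIntegrable.locallyIntegrableOn _) ha hb
    hzero tendsto_exp_neg_atTop_nhds_zero
    (by simpa only [smul_eq_mul, inv_mul_eq_div] using integrableOn_exp_sub_exp_div ha hb)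
  simpa only [smul_eq_mul, inv_mul_eq_div, sub_zero, mul_one] using h

end Frullani

/-! ### The sign of the interpolation error of the exponential -/

lemma nonneg_of_hasDerivAt_nonneg {f f' : ℝ → ℝ} (h₀ : 0 ≤ f 0)
    (hf : ∀ u, 0 ≤ u → HasDerivAt f (f' u) u) (hf' : ∀ u, 0 < u → 0 ≤ f' u) {u : ℝ}
    (hu : 0 ≤ u) : 0 ≤ f u := by
  have hmono : MonotoneOn f (Set.Ici 0) :=
    monotoneOn_of_hasDerivWithinAt_nonneg (convex_Ici 0)
      (fun y hy ↦ (hf y hy).continuousAt.continuousWithinAt)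
      (fun y hy ↦ (hf y (interior_subset hy)).hasDerivWithinAt)
      (fun y hy ↦ hf' y (by simpa using hy))
  exact h₀.trans (hmono Set.self_mem_Ici hu hu)

/-- The remainder of order `k` in the binomial expansion of `exp (-z * u) = (1 - t) ^ z` in powers
of `t = 1 - exp (-u)`, the coefficients being written with falling factorials. -/
noncomputable def binomialRemainder (k : ℕ) (z u : ℝ) : ℝ :=
  exp (-(z * u)) -
    ∑ i ∈ range k, (-1) ^ i * (descPochhammer ℝ i).eval z / i.factorial * (1 - exp (-u)) ^ i

lemma descPochhammer_succ_eval_left {R : Type*} [CommRing R] (k : ℕ) (z : R) :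
    (descPochhammer R (k + 1)).eval z = z * (descPochhammer R k).eval (z - 1) := by
  simp [descPochhammer_succ_left]

lemma hasDerivAt_binomialRemainder_succ (k : ℕ) (z u : ℝ) :
    HasDerivAt (binomialRemainder (k + 1) z)
      (-(z * exp (-u)) * binomialRemainder k (z - 1) u) u := by
  have hpow (i : ℕ) : HasDerivAt (fun v ↦ (1 - exp (-v)) ^ (i + 1))
      ((i + 1) * (1 - exp (-u)) ^ i * exp (-u)) u := by
    simpa using ((hasDerivAt_neg u).exp.const_sub 1).fun_pow (i + 1)
  have hexp : HasDerivAt (fun v ↦ exp (-(z * v))) (-(z * exp (-u)) * exp (-((z - 1) * u))) u := by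
    refine ((hasDerivAt_id' u).const_mul z).fun_neg.exp.congr_deriv ?_
    rw [neg_mul, mul_assoc, ← exp_add]
    ring_nf
  unfold binomialRemainder
  simp only [sum_range_succ' _ k, pow_zero, mul_one]
  refine (hexp.fun_sub ((HasDerivAt.fun_sum fun i _ ↦ (hpow i).const_mul
    ((-1) ^ (i + 1) * (descPochhammer ℝ (i + 1)).eval z / (i + 1).factorial)).add_const
      _)).congr_deriv ?_
  rw [mul_sub, mul_sum]
  congr 1
  refine sum_congr rfl fun i _ ↦ ?_
  rw [descPochhammer_succ_eval_left, Nat.factorial_succ]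
  push_cast
  field_simp
  ring

lemma binomialRemainder_succ_zero (k : ℕ) (z : ℝ) : binomialRemainder (k + 1) z 0 = 0 := by
  simp [binomialRemainder, sum_range_succ']

lemma descPochhammer_mul_binomialRemainder_nonneg (k : ℕ) (z : ℝ) {u : ℝ} (hu : 0 ≤ u) :
    0 ≤ (-1) ^ k * (descPochhammer ℝ k).eval z * binomialRemainder k z u := by
  induction k generalizing z u with
  | zero => simp [binomialRemainder, exp_nonneg]
  | succ k ih =>
    refine nonneg_of_hasDerivAt_nonneg (by simp [binomialRemainder_succ_zero])
      (fun v _ ↦ (hasDerivAt_binomialRemainder_succ k z v).const_mul _) (fun v hv ↦ ?_) hu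
    rw [descPochhammer_succ_eval_left]
    calc 0 ≤ z ^ 2 * exp (-v) *
          ((-1) ^ k * (descPochhammer ℝ k).eval (z - 1) * binomialRemainder k (z - 1) v) :=
          mul_nonneg (by positivity) (ih _ hv.le)
      _ = _ := by ring

lemma newtonRemainder_exp_eq (x u : ℝ) :
    newtonRemainder (fun y ↦ exp (-(y * u))) x = exp (-u) *
      (exp (-((x - 1) * u)) - 1 + (x - 1) * (1 - exp (-u))
        - (x - 1) * (x - 2) / 2 * (1 - exp (-u)) ^ 2) := by
  have h₂ : exp (-(2 * u)) = exp (-u) ^ 2 := by rw [← exp_nat_mul]; ring_nf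
  have h₃ : exp (-(3 * u)) = exp (-u) ^ 3 := by rw [← exp_nat_mul]; ring_nf
  have hx : exp (-(x * u)) = exp (-u) * exp (-((x - 1) * u)) := by rw [← exp_add]; ring_nf
  rw [newtonRemainder, h₂, h₃, hx, one_mul]
  ring

lemma mul_newtonRemainder_exp_nonpos (x : ℝ) {u : ℝ} (hu : 0 ≤ u) :
    (x - 1) * (x - 2) * (x - 3) * newtonRemainder (fun y ↦ exp (-(y * u))) x ≤ 0 := by
  have h := mul_nonneg (exp_nonneg (-u))
    (descPochhammer_mul_binomialRemainder_nonneg 3 (x - 1) hu)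
  simp only [binomialRemainder, sum_range_succ, sum_range_zero, descPochhammer_succ_eval_left,
    descPochhammer_zero, Polynomial.eval_one, Nat.factorial] at h
  rw [newtonRemainder_exp_eq]
  push_cast at h
  linear_combination h

lemma abs_newtonRemainder_exp (x : ℝ) {u : ℝ} (hu : 0 ≤ u) :
    |newtonRemainder (fun y ↦ exp (-(y * u))) x| =
      -Real.sign ((x - 1) * (x - 2) * (x - 3)) * newtonRemainder (fun y ↦ exp (-(y * u))) x := by
  have h := mul_newtonRemainder_exp_nonpos x hu
  rcases lt_trichotomy ((x - 1) * (x - 2) * (x - 3)) 0 with hneg | hzero | hpos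
  · rw [sign_of_neg hneg, neg_neg, one_mul, abs_of_nonneg (nonneg_of_mul_nonpos_right h hneg)]
  · have hnode : x = 1 ∨ x = 2 ∨ x = 3 := by
      simpa [sub_eq_zero, or_assoc] using hzero
    have hvanish : newtonRemainder (fun y ↦ exp (-(y * u))) x = 0 := by
      rcases hnode with rfl | rfl | rfl <;> rw [newtonRemainder] <;> ring
    simp [hvanish]
  · rw [sign_of_pos hpos, neg_one_mul, abs_of_nonpos (nonpos_of_mul_nonpos_right h hpos)]

/-! ### Expansion of the integrand -/

/-- The `n`-th term of the expansion of Alekseevsky's integrand obtained from the Weierstrass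
product: the interpolation error of the integrand of `(n + 1) * log ((n + x) / (n + 1))` in
Frullani's formula. -/
noncomputable def alekseevskyTerm (x : ℝ) (n : ℕ) (u : ℝ) : ℝ :=
  newtonRemainder (fun y ↦ (n + 1) * ((exp (-((n + 1) * u)) - exp (-((n + y) * u))) / u)) x

lemma alekseevskyTerm_eq (x : ℝ) (n : ℕ) (u : ℝ) :
    alekseevskyTerm x n u =
      (n + 1) * exp (-u) ^ n * (-newtonRemainder (fun y ↦ exp (-(y * u))) x / u) := by
  have hexp (y : ℝ) : exp (-((n + y) * u)) = exp (-u) ^ n * exp (-(y * u)) := by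
    rw [← exp_nat_mul, ← exp_add]
    ring_nf
  calc alekseevskyTerm x n u
      = newtonRemainder (fun y ↦ -((n + 1) * exp (-u) ^ n / u) * exp (-(y * u)) +
          ((n + 1) * (exp (-((n + 1) * u)) / u) + 0 * y + 0 * y ^ 2)) x := by
        refine newtonRemainder_congr fun y _ ↦ ?_
        rw [hexp y]
        ring
    _ = _ := by
        rw [newtonRemainder_mul_add_quadratic]
        ring

lemma hasSum_alekseevskyTerm (x : ℝ) {u : ℝ} (hu : 0 < u) :
    HasSum (alekseevskyTerm x · u)
      ((exp (-u) / u) * ((x - 1) * (x - 2) / 2 - (x - 1) / (1 - exp (-u)) +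
        (1 - exp (-(x - 1) * u)) / (1 - exp (-u)) ^ 2)) := by
  have hlt : exp (-u) < 1 := exp_lt_one_iff.2 (neg_lt_zero.2 hu)
  have hgeom := (hasSum_choose_mul_geometric_of_norm_lt_one 1 (r := exp (-u))
    (by rwa [norm_of_nonneg (exp_nonneg _)])).mul_right
      (-newtonRemainder (fun y ↦ exp (-(y * u))) x / u)
  have hvalue : 1 / (1 - exp (-u)) ^ (1 + 1) * (-newtonRemainder (fun y ↦ exp (-(y * u))) x / u) =
      (exp (-u) / u) * ((x - 1) * (x - 2) / 2 - (x - 1) / (1 - exp (-u)) +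
        (1 - exp (-(x - 1) * u)) / (1 - exp (-u)) ^ 2) := by
    have hne : 1 - exp (-u) ≠ 0 := (sub_pos.2 hlt).ne'
    rw [newtonRemainder_exp_eq, neg_mul]
    field_simp
    ring
  rw [← hvalue]
  simpa only [alekseevskyTerm_eq, Nat.choose_one_right, Nat.cast_add_one] using hgeom

section Integral

variable {x : ℝ} (hx : 0 < x) (n : ℕ)
include hx

lemma integrableOn_frullani_of_mem_nodes :
    ∀ y ∈ ({1, 2, 3, x} : Set ℝ), IntegrableOn
      (fun u ↦ ((n : ℝ) + 1) * ((exp (-((n + 1) * u)) - exp (-((n + y) * u))) / u))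
      (Set.Ioi 0) := by
  intro y hy
  have hy' := pos_of_mem_nodes hx y hy
  exact (integrableOn_exp_sub_exp_div (by positivity) (by positivity)).const_mul _

lemma integrableOn_alekseevskyTerm : IntegrableOn (alekseevskyTerm x n) (Set.Ioi 0) :=
  integrable_newtonRemainder (integrableOn_frullani_of_mem_nodes hx n)

lemma integral_alekseevskyTerm :
    ∫ u in Set.Ioi (0 : ℝ), alekseevskyTerm x n u =
      newtonRemainder (logWeierstrassFactor n) x := by
  calc ∫ u in Set.Ioi (0 : ℝ), alekseevskyTerm x n u
      = newtonRemainder (fun y ↦ ∫ u in Set.Ioi (0 : ℝ),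
          (n + 1) * ((exp (-((n + 1) * u)) - exp (-((n + y) * u))) / u)) x :=
        integral_newtonRemainder (integrableOn_frullani_of_mem_nodes hx n)
    _ = newtonRemainder (fun y ↦ 1 * logWeierstrassFactor n y + ((-1 - 1 / (2 * (n + 1))) +
          (1 + 1 / (n + 1)) * y + (-1 / (2 * (n + 1))) * y ^ 2)) x := by
        refine newtonRemainder_congr fun y hy ↦ ?_
        have hy' := pos_of_mem_nodes hx y hy
        rw [integral_const_mul, integral_exp_sub_exp_div (by positivity) (by positivity),
          logWeierstrassFactor, one_add_sub_one_div_eq]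
        field_simp
        ring
    _ = newtonRemainder (logWeierstrassFactor n) x := by
        rw [newtonRemainder_mul_add_quadratic, one_mul]

lemma integral_norm_alekseevskyTerm :
    ∫ u in Set.Ioi (0 : ℝ), ‖alekseevskyTerm x n u‖ =
      Real.sign ((x - 1) * (x - 2) * (x - 3)) * newtonRemainder (logWeierstrassFactor n) x := by
  rw [← integral_alekseevskyTerm hx, ← integral_const_mul]
  refine setIntegral_congr_fun measurableSet_Ioi fun u (hu : 0 < u) ↦ ?_
  have hcoeff : 0 ≤ (n + 1) * exp (-u) ^ n := by positivity
  simp only [alekseevskyTerm_eq, norm_mul, norm_div, norm_neg, norm_of_nonneg hcoeff,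
    norm_of_nonneg hu.le, norm_eq_abs, abs_newtonRemainder_exp x hu.le]
  ring

end Integral

open MeasureTheory in
theorem log_doubleGamma_integral (x : ℝ) (hx : 0 < x) :
    Real.log (doubleGamma x) =
      ∫ u in Set.Ioi (0 : ℝ),
        (Real.exp (-u) / u) *
          ((x - 1) * (x - 2) / 2 - (x - 1) / (1 - Real.exp (-u)) +
            (1 - Real.exp (-(x - 1) * u)) / (1 - Real.exp (-u)) ^ 2) := by
  have hsum := hasSum_newtonRemainder_logWeierstrassFactor hx
  have hnorm : Summable fun n ↦ ∫ u in Set.Ioi (0 : ℝ), ‖alekseevskyTerm x n u‖ := by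
    simpa only [integral_norm_alekseevskyTerm hx] using hsum.summable.mul_left _
  calc Real.log (doubleGamma x)
      = ∑' n, ∫ u in Set.Ioi (0 : ℝ), alekseevskyTerm x n u := by
        simp only [integral_alekseevskyTerm hx, hsum.tsum_eq]
    _ = ∫ u in Set.Ioi (0 : ℝ), ∑' n, alekseevskyTerm x n u :=
        integral_tsum_of_summable_integral_norm (integrableOn_alekseevskyTerm hx) hnorm
    _ = _ :=
        setIntegral_congr_fun measurableSet_Ioi fun _ hu ↦ (hasSum_alekseevskyTerm x hu).tsum_eq
end
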